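/- arXiv:1410.8657 — 3 statements merged into one kernel-verified Lean document; each statement's English description precedes it below -/
import Mathlib

section
/- The subgroup of the symmetric group on {1,…,28} generated by the permutations σ₁, σ₂, σ₃ is a finite group of order 6048 (the order of the simple group U₃(3)). -/
open Equiv

/-- σ₁ = (3,8,23,20)(4,24,6,12)(7,9,14,22)(10,19,11,13)(15,16,21,18)(17,26,27,25),
written 0-indexed on `Fin 28`. -/
def sigma1 : Equiv.Perm (Fin 28) :=
  c[(2 : Fin 28), 7, 22, 19] * c[(3 : Fin 28), 23, 5, 11] * c[(6 : Fin 28), 8, 13, 21] *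
    c[(9 : Fin 28), 18, 10, 12] * c[(14 : Fin 28), 15, 20, 17] * c[(16 : Fin 28), 25, 26, 24]

/-- σ₂ = (1,9,20,12,19,23,6,16)(2,27,14,17,13,26,15,25)(3,24)(4,5,10,21,7,11,28,8),
written 0-indexed on `Fin 28`. -/
def sigma2 : Equiv.Perm (Fin 28) :=
  c[(0 : Fin 28), 8, 19, 11, 18, 22, 5, 15] * c[(1 : Fin 28), 26, 13, 16, 12, 25, 14, 24] *
    c[(2 : Fin 28), 23] * c[(3 : Fin 28), 4, 9, 20, 6, 10, 27, 7]

/-- σ₃ = (1,13,20,15,19,2,6,14)(4,9,10,12,7,23,28,16)(5,27,21,17,11,26,8,25)(22,24),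
written 0-indexed on `Fin 28`. -/
def sigma3 : Equiv.Perm (Fin 28) :=
  c[(0 : Fin 28), 12, 19, 14, 18, 1, 5, 13] * c[(3 : Fin 28), 8, 9, 11, 6, 22, 27, 15] *
    c[(4 : Fin 28), 26, 20, 16, 10, 25, 7, 24] * c[(21 : Fin 28), 23]

/-!
The group `G` generated by `σ₁, σ₂, σ₃` is `U₃(3)` acting on the 28 points of the Hermitian unital;
it has a BN-pair of rank one. The element `σ₂` of order 8 generates a torus `T` fixing exactly two
points, `17` and `21`. It normalises a 3-group `U` which fixes `17` and has order at most 27, by its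
commutator relations, yet is transitive on the other 27 points; hence `U` is regular on these points
and `B = TU` has order `27 * 8`. An involution `w` normalising `T` exchanges `17` and `21`.
Since `U` is regular, representatives for the `T`-orbits on the remaining points correspond to
representatives for the nontrivial elements of `U` up to `T`-conjugacy, so it takes only a few
relations to prove `w B w⁻¹ ⊆ B ∪ B w B`. Therefore `G = ⟨B, w⟩ = B ∪ B w B`, the stabiliser of `17`
is `B`, and `|G| = 28 * (27 * 8)`.
-/

namespace Stover

open MulAction Subgroup DoubleCoset
open scoped Pointwise

section General

variable {G α : Type*} [Group G] [MulAction G α] {B : Subgroup G} {S : Set G} {b c g w : G} {a : α}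

theorem ncard_orbit_mul_card_inf_stabilizer (K : Subgroup G) (x : α) :
    (orbit K x).ncard * Nat.card (K ⊓ stabilizer G x : Subgroup G) = Nat.card K := by
  have hstab : (K ⊓ stabilizer G x).subgroupOf K = stabilizer K x := inf_subgroupOf_left _ _
  rw [← index_stabilizer, ← hstab, ← Nat.card_congr (subgroupOfEquivOfLe inf_le_left).toEquiv,
    index_mul_card]

theorem zpowers_le_normalizer_closure [Finite (closure S)]
    (hconj : ∀ s ∈ S, g * s * g⁻¹ ∈ closure S) : zpowers g ≤ normalizer (closure S) := by
  have hmap : (closure S).map (MulAut.conj g).toMonoidHom ≤ closure S := by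
    rw [MonoidHom.map_closure, closure_le]
    rintro _ ⟨s, hs, rfl⟩
    exact hconj s hs
  exact zpowers_le.mpr <|
    mem_normalizer_fintype fun s hs => hmap (mem_map_of_mem (MulAut.conj g).toMonoidHom hs)

theorem coe_closure_insert [Finite (closure S)] (hconj : ∀ s ∈ S, g * s * g⁻¹ ∈ closure S) :
    (closure (insert g S) : Set G) = (zpowers g : Set G) * closure S := by
  rw [Set.insert_eq, Subgroup.closure_union, ← zpowers_eq_closure,
    coe_mul_of_left_le_normalizer_right _ _ (zpowers_le_normalizer_closure hconj)]

theorem card_closure_insert_le [Finite (closure S)] (hconj : ∀ s ∈ S, g * s * g⁻¹ ∈ closure S) :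
    Nat.card (closure (insert g S)) ≤ orderOf g * Nat.card (closure S) := by
  rw [← SetLike.coe_sort_coe, coe_closure_insert hconj, ← Nat.card_zpowers]
  exact Set.natCard_mul_le

theorem mul_mul_mem_union_doubleCoset (hb : b ∈ B) (hc : c ∈ B)
    (hg : g ∈ (B : Set G) ∪ doubleCoset w B B) : b * g * c ∈ (B : Set G) ∪ doubleCoset w B B := by
  obtain hg | hg := hg
  · exact .inl (mul_mem (mul_mem hb hg) hc)
  · obtain ⟨b', hb', c', hc', rfl⟩ := mem_doubleCoset.mp hg
    exact .inr (mem_doubleCoset.mpr ⟨b * b', mul_mem hb hb', c' * c, mul_mem hc' hc, by group⟩)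

theorem mul_mem_union_doubleCoset (hsq : w * w ∈ B)
    (hconj : ∀ b ∈ B, w * b * w⁻¹ ∈ (B : Set G) ∪ doubleCoset w B B)
    (hg : g ∈ (B : Set G) ∪ doubleCoset w B B) : w * g ∈ (B : Set G) ∪ doubleCoset w B B := by
  obtain hg | hg := hg
  · exact .inr (mem_doubleCoset.mpr ⟨1, one_mem B, g, hg, by group⟩)
  · obtain ⟨b, hb, c, hc, rfl⟩ := mem_doubleCoset.mp hg
    have h := mul_mul_mem_union_doubleCoset (one_mem B) (mul_mem hsq hc) (hconj b hb)
    convert h using 1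
    group

theorem coe_sup_zpowers_subset_union_doubleCoset (hsq : w * w ∈ B)
    (hconj : ∀ b ∈ B, w * b * w⁻¹ ∈ (B : Set G) ∪ doubleCoset w B B) :
    ((B ⊔ zpowers w : Subgroup G) : Set G) ⊆ B ∪ doubleCoset w B B := by
  intro g hg
  have mul_left {b h : G} (hb : b ∈ B) (hh : h ∈ (B : Set G) ∪ doubleCoset w B B) :
      b * h ∈ (B : Set G) ∪ doubleCoset w B B := by
    simpa only [mul_one] using mul_mul_mem_union_doubleCoset hb (one_mem B) hh
  rw [← closure_eq B, zpowers_eq_closure, ← Subgroup.closure_union] at hg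
  induction hg using closure_induction_left with
  | one => exact .inl (one_mem B)
  | mul_left s hs h _ ih =>
    obtain hs | rfl := hs
    exacts [mul_left hs ih, mul_mem_union_doubleCoset hsq hconj ih]
  | inv_mul_cancel s hs h _ ih =>
    obtain hs | rfl := hs
    · exact mul_left (inv_mem hs) ih
    · rw [show s⁻¹ * h = (s * s)⁻¹ * (s * h) by group]
      exact mul_left (inv_mem hsq) (mul_mem_union_doubleCoset hsq hconj ih)

theorem sup_zpowers_inf_stabilizer (hBa : B ≤ stabilizer G a) (hwa : w • a ≠ a) (hsq : w * w ∈ B)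
    (hconj : ∀ b ∈ B, w * b * w⁻¹ ∈ (B : Set G) ∪ doubleCoset w B B) :
    (B ⊔ zpowers w) ⊓ stabilizer G a = B := by
  refine le_antisymm (fun g ⟨hg, hga⟩ => ?_) (le_inf le_sup_left hBa)
  obtain hgB | hgw := coe_sup_zpowers_subset_union_doubleCoset hsq hconj hg
  · exact hgB
  · obtain ⟨b, hb, c, hc, rfl⟩ := mem_doubleCoset.mp hgw
    have hw : w ∈ stabilizer G a :=
      (mul_mem_cancel_left (hBa hb)).mp ((mul_mem_cancel_right (hBa hc)).mp hga)
    exact absurd hw hwa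

end General

/-- The first generator of the unipotent group. It is given by its cycles rather than by its word
`rootX_eq` in the `σᵢ`, as are `rootZ` and `weyl`, to make relations between permutations cheap to
decide. -/
def rootX : Perm (Fin 28) :=
  c[(0 : Fin 28), 14, 12] * c[(1 : Fin 28), 7, 16] * c[(2 : Fin 28), 26, 9] *
    c[(3 : Fin 28), 8, 13] * c[(4 : Fin 28), 6, 20] * c[(5 : Fin 28), 23, 27] *
    c[(10 : Fin 28), 11, 18] * c[(15 : Fin 28), 22, 24] * c[(19 : Fin 28), 25, 21]

/-- The second generator of the unipotent group, a torus conjugate of the first. -/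
def rootY : Perm (Fin 28) := sigma2 * rootX * sigma2⁻¹

/-- The generator of the centre of the unipotent group. -/
def rootZ : Perm (Fin 28) :=
  c[(0 : Fin 28), 6, 24] * c[(1 : Fin 28), 10, 8] * c[(2 : Fin 28), 21, 23] *
    c[(3 : Fin 28), 16, 18] * c[(4 : Fin 28), 22, 12] * c[(5 : Fin 28), 9, 25] *
    c[(7 : Fin 28), 11, 13] * c[(14 : Fin 28), 20, 15] * c[(19 : Fin 28), 27, 26]

/-- The Weyl element: an involution normalising the torus `⟨σ₂⟩` and exchanging its two fixed points
`17` and `21`. -/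
def weyl : Perm (Fin 28) :=
  c[(0 : Fin 28), 14] * c[(1 : Fin 28), 19] * c[(2 : Fin 28), 23] * c[(3 : Fin 28), 6] *
    c[(5 : Fin 28), 12] * c[(8 : Fin 28), 16] * c[(9 : Fin 28), 27] * c[(11 : Fin 28), 25] *
    c[(13 : Fin 28), 18] * c[(15 : Fin 28), 26] * c[(17 : Fin 28), 21] * c[(22 : Fin 28), 24]

/-- The unipotent group `U`, a Sylow 3-subgroup which is extraspecial of order 27. -/
def unipotent : Subgroup (Perm (Fin 28)) := closure {rootX, rootY, rootZ}

/-- The Borel subgroup `B`, the semidirect product of the torus `⟨σ₂⟩` with `U`. -/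
def borel : Subgroup (Perm (Fin 28)) := closure {sigma2, rootX, rootY, rootZ}

/-- Representatives for the nontrivial elements of `U` up to conjugation by the torus: their values
at `21` represent the torus orbits on the points other than `17` and `21`. -/
def orbitRep : Fin 4 → Perm (Fin 28) := ![rootZ, rootX * rootZ, rootY, rootY⁻¹]

theorem rootX_eq : rootX = sigma3 * sigma2 * sigma1 * sigma2 ^ 2 * sigma3 * sigma2 * sigma1 := by
  decide +kernel

theorem rootZ_eq : rootZ = sigma3 * sigma2 ^ 3 := by decide +kernel

theorem weyl_eq : weyl = (sigma2 ^ 3)⁻¹ * rootY * sigma1 * rootY⁻¹ * rootZ := by decide +kernel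

theorem orderOf_sigma2 : orderOf sigma2 = 8 :=
  orderOf_eq_prime_pow (p := 2) (n := 2) (by decide +kernel) (by decide +kernel)

theorem rootX_pow_three : rootX ^ 3 = 1 := by decide +kernel

theorem rootY_pow_three : rootY ^ 3 = 1 := by decide +kernel

theorem rootZ_pow_three : rootZ ^ 3 = 1 := by decide +kernel

theorem sigma2_conj_rootX : sigma2 * rootX * sigma2⁻¹ = rootY := rfl

theorem sigma2_conj_rootY : sigma2 * rootY * sigma2⁻¹ = rootX * rootY := by decide +kernel

theorem sigma2_conj_rootZ : sigma2 * rootZ * sigma2⁻¹ = rootZ⁻¹ := by decide +kernel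

theorem rootY_conj_rootZ : rootY * rootZ * rootY⁻¹ = rootZ := by decide +kernel

theorem rootX_conj_rootY : rootX * rootY * rootX⁻¹ = rootZ * rootY := by decide +kernel

theorem rootX_conj_rootZ : rootX * rootZ * rootX⁻¹ = rootZ := by decide +kernel

theorem weyl_mul_weyl : weyl * weyl = 1 := by decide +kernel

theorem weyl_apply : weyl 17 = 21 := by decide +kernel

theorem weyl_conj_sigma2 : weyl * sigma2 * weyl⁻¹ = sigma2 ^ 5 := by decide +kernel

theorem weyl_conj_rootZ : weyl * rootZ * weyl⁻¹ = rootZ⁻¹ * sigma2 ^ 2 * weyl * rootZ⁻¹ := by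
  decide +kernel

theorem weyl_conj_rootX_mul_rootZ :
    weyl * (rootX * rootZ) * weyl⁻¹ = (rootX * rootZ)⁻¹ * weyl * (rootX * rootZ)⁻¹ := by
  decide +kernel

theorem weyl_conj_rootY :
    weyl * rootY * weyl⁻¹ = rootX⁻¹ * sigma2 * weyl * (rootY * rootX) := by decide +kernel

theorem rootX_mem_unipotent : rootX ∈ unipotent := subset_closure (by simp)

theorem rootY_mem_unipotent : rootY ∈ unipotent := subset_closure (by simp)

theorem rootZ_mem_unipotent : rootZ ∈ unipotent := subset_closure (by simp)

theorem unipotent_le_borel : unipotent ≤ borel := closure_mono (Set.subset_insert _ _)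

theorem sigma2_mem_borel : sigma2 ∈ borel := subset_closure (by simp)

theorem sigma2_conj_mem_unipotent :
    ∀ g ∈ ({rootX, rootY, rootZ} : Set (Perm (Fin 28))), sigma2 * g * sigma2⁻¹ ∈ unipotent := by
  rintro _ (rfl | rfl | rfl)
  · rw [sigma2_conj_rootX]
    exact rootY_mem_unipotent
  · rw [sigma2_conj_rootY]
    exact mul_mem rootX_mem_unipotent rootY_mem_unipotent
  · rw [sigma2_conj_rootZ]
    exact inv_mem rootZ_mem_unipotent

theorem card_unipotent_le : Nat.card unipotent ≤ 27 := by
  have order_le {g : Perm (Fin 28)} (hg : g ^ 3 = 1) : orderOf g ≤ 3 :=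
    orderOf_le_of_pow_eq_one three_pos hg
  have hZ : Nat.card (closure {rootZ}) ≤ 3 := by
    rw [← zpowers_eq_closure, Nat.card_zpowers]
    exact order_le rootZ_pow_three
  have hYZ : Nat.card (closure {rootY, rootZ}) ≤ orderOf rootY * Nat.card (closure {rootZ}) := by
    refine card_closure_insert_le ?_
    rintro _ rfl
    rw [rootY_conj_rootZ]
    exact mem_closure_singleton_self _
  have hXYZ : Nat.card unipotent ≤ orderOf rootX * Nat.card (closure {rootY, rootZ}) := by
    have hY : rootY ∈ closure {rootY, rootZ} := subset_closure (by simp)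
    have hZ : rootZ ∈ closure {rootY, rootZ} := subset_closure (by simp)
    refine card_closure_insert_le ?_
    rintro _ (rfl | rfl)
    · rw [rootX_conj_rootY]
      exact mul_mem hZ hY
    · rwa [rootX_conj_rootZ]
  calc Nat.card unipotent
      ≤ orderOf rootX * (orderOf rootY * Nat.card (closure {rootZ})) := hXYZ.trans (by gcongr)
    _ ≤ 3 * (3 * 3) := by
        gcongr
        exacts [order_le rootX_pow_three, order_le rootY_pow_three]

theorem coe_borel : (borel : Set (Perm (Fin 28))) =
    (zpowers sigma2 : Set (Perm (Fin 28))) * unipotent :=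
  coe_closure_insert sigma2_conj_mem_unipotent

theorem card_borel_le : Nat.card borel ≤ 27 * 8 :=
  calc Nat.card borel
      ≤ orderOf sigma2 * Nat.card unipotent := card_closure_insert_le sigma2_conj_mem_unipotent
    _ = Nat.card unipotent * 8 := by rw [orderOf_sigma2, mul_comm]
    _ ≤ 27 * 8 := Nat.mul_le_mul_right 8 card_unipotent_le

theorem borel_le_stabilizer : borel ≤ stabilizer (Perm (Fin 28)) (17 : Fin 28) := by
  have hfix : sigma2 17 = 17 ∧ rootX 17 = 17 ∧ rootY 17 = 17 ∧ rootZ 17 = 17 := by decide +kernel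
  refine (closure_le _).mpr ?_
  rintro _ (rfl | rfl | rfl | rfl)
  exacts [hfix.1, hfix.2.1, hfix.2.2.1, hfix.2.2.2]

theorem sigma2_mem_stabilizer : sigma2 ∈ stabilizer (Perm (Fin 28)) (21 : Fin 28) :=
  show sigma2 21 = 21 by decide +kernel

theorem orbitRep_mem_unipotent (i : Fin 4) : orbitRep i ∈ unipotent := by
  fin_cases i
  exacts [rootZ_mem_unipotent, mul_mem rootX_mem_unipotent rootZ_mem_unipotent,
    rootY_mem_unipotent, inv_mem rootY_mem_unipotent]

theorem exists_conj_orbitRep_apply {c : Fin 28} (h17 : c ≠ 17) (h21 : c ≠ 21) :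
    ∃ i, ∃ m : ℕ, sigma2 ^ m * orbitRep i * (sigma2 ^ m)⁻¹ ∈ unipotent ∧
      (sigma2 ^ m * orbitRep i * (sigma2 ^ m)⁻¹) 21 = c := by
  have horbit : ∀ c : Fin 28, c ≠ 17 → c ≠ 21 →
      ∃ i, ∃ m : Fin 8, (sigma2 ^ (m : ℕ)) (orbitRep i 21) = c := by
    decide +kernel
  obtain ⟨i, m, rfl⟩ := horbit c h17 h21
  have hnorm := zpowers_le_normalizer_closure sigma2_conj_mem_unipotent
  refine ⟨i, m, (hnorm (npow_mem_zpowers _ _) _).mp (orbitRep_mem_unipotent i), ?_⟩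
  have hfix : (sigma2 ^ (m : ℕ))⁻¹ 21 = 21 :=
    Subgroup.inv_mem _ (Subgroup.pow_mem _ sigma2_mem_stabilizer m)
  simp only [Perm.mul_apply, hfix]

theorem orbit_unipotent : orbit unipotent (21 : Fin 28) = {17}ᶜ := by
  ext c
  refine ⟨?_, fun h17 => ?_⟩
  · rintro ⟨⟨u, hu⟩, rfl⟩ h
    have hu17 : u 17 = 17 := borel_le_stabilizer (unipotent_le_borel hu)
    exact absurd (u.injective (hu17.trans h.symm)) (by decide)
  · by_cases h21 : c = 21
    · exact h21 ▸ mem_orbit_self _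
    · obtain ⟨i, m, hmem, happly⟩ := exists_conj_orbitRep_apply h17 h21
      exact ⟨⟨_, hmem⟩, happly⟩

theorem ncard_orbit_unipotent : (orbit unipotent (21 : Fin 28)).ncard = 27 := by
  rw [orbit_unipotent, Set.ncard_compl, Set.ncard_singleton, Nat.card_fin]

theorem unipotent_inf_stabilizer :
    unipotent ⊓ stabilizer (Perm (Fin 28)) (21 : Fin 28) = ⊥ := by
  have hcard := ncard_orbit_mul_card_inf_stabilizer unipotent (21 : Fin 28)
  rw [ncard_orbit_unipotent] at hcard
  have hle := card_unipotent_le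
  exact card_le_one_iff_eq_bot _ |>.mp (by omega)

theorem exists_eq_conj_orbitRep {u : Perm (Fin 28)} (hu : u ∈ unipotent) (hne : u ≠ 1) :
    ∃ i, ∃ m : ℕ, u = sigma2 ^ m * orbitRep i * (sigma2 ^ m)⁻¹ := by
  have h17 : u 21 ≠ 17 := by
    have h : u 21 ∈ orbit unipotent (21 : Fin 28) := ⟨⟨u, hu⟩, rfl⟩
    rwa [orbit_unipotent] at h
  have h21 : u 21 ≠ 21 := fun h => by
    have hmem : u ∈ unipotent ⊓ stabilizer (Perm (Fin 28)) (21 : Fin 28) := ⟨hu, h⟩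
    rw [unipotent_inf_stabilizer] at hmem
    exact hne (mem_bot.mp hmem)
  obtain ⟨i, m, hmem, happly⟩ := exists_conj_orbitRep_apply h17 h21
  refine ⟨i, m, (inv_mul_eq_one.mp ?_).symm⟩
  rw [← mem_bot, ← unipotent_inf_stabilizer]
  exact mem_inf.mpr ⟨mul_mem (inv_mem hmem) hu, Perm.inv_eq_iff_eq.mpr happly.symm⟩

theorem card_borel : Nat.card borel = 27 * 8 := by
  refine le_antisymm card_borel_le ?_
  have htorus : zpowers sigma2 ≤ borel ⊓ stabilizer (Perm (Fin 28)) (21 : Fin 28) :=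
    zpowers_le.mpr ⟨sigma2_mem_borel, sigma2_mem_stabilizer⟩
  have horbit : orbit unipotent (21 : Fin 28) ⊆ orbit borel (21 : Fin 28) := by
    rintro _ ⟨⟨u, hu⟩, rfl⟩
    exact ⟨⟨u, unipotent_le_borel hu⟩, rfl⟩
  calc 27 * 8 = (orbit unipotent (21 : Fin 28)).ncard * Nat.card (zpowers sigma2) := by
        rw [ncard_orbit_unipotent, Nat.card_zpowers, orderOf_sigma2]
    _ ≤ (orbit borel (21 : Fin 28)).ncard *
          Nat.card (borel ⊓ stabilizer (Perm (Fin 28)) (21 : Fin 28) : Subgroup _) :=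
        Nat.mul_le_mul (Set.ncard_le_ncard horbit) (card_le_of_le htorus)
    _ = Nat.card borel := ncard_orbit_mul_card_inf_stabilizer borel 21

theorem weyl_conj_orbitRep_mem (i : Fin 4) :
    weyl * orbitRep i * weyl⁻¹ ∈ doubleCoset weyl borel borel := by
  have hX : rootX ∈ borel := unipotent_le_borel rootX_mem_unipotent
  have hY : rootY ∈ borel := unipotent_le_borel rootY_mem_unipotent
  have hZ : rootZ ∈ borel := unipotent_le_borel rootZ_mem_unipotent
  have hS := sigma2_mem_borel
  have hXZ := mul_mem hX hZ
  have hYX := mul_mem hY hX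
  have hXS := mul_mem (inv_mem hX) hS
  refine mem_doubleCoset.mpr ?_
  fin_cases i
  · exact ⟨_, mul_mem (inv_mem hZ) (pow_mem hS 2), _, inv_mem hZ, weyl_conj_rootZ⟩
  · exact ⟨_, inv_mem hXZ, _, inv_mem hXZ, weyl_conj_rootX_mul_rootZ⟩
  · exact ⟨_, hXS, _, hYX, weyl_conj_rootY⟩
  · refine ⟨_, inv_mem hYX, _, inv_mem hXS, ?_⟩
    have hw : weyl⁻¹ = weyl := inv_eq_of_mul_eq_one_left weyl_mul_weyl
    calc weyl * rootY⁻¹ * weyl⁻¹ = (weyl * rootY * weyl⁻¹)⁻¹ := by group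
      _ = (rootY * rootX)⁻¹ * weyl⁻¹ * (rootX⁻¹ * sigma2)⁻¹ := by rw [weyl_conj_rootY]; group
      _ = (rootY * rootX)⁻¹ * weyl * (rootX⁻¹ * sigma2)⁻¹ := by rw [hw]

theorem weyl_conj_zpowers_sigma2_mem {t : Perm (Fin 28)} (ht : t ∈ zpowers sigma2) :
    weyl * t * weyl⁻¹ ∈ borel := by
  obtain ⟨m, rfl⟩ := ht
  rw [← conj_zpow, weyl_conj_sigma2]
  exact zpow_mem (pow_mem sigma2_mem_borel 5) m

theorem weyl_conj_unipotent_mem {u : Perm (Fin 28)} (hu : u ∈ unipotent) :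
    weyl * u * weyl⁻¹ ∈ (borel : Set (Perm (Fin 28))) ∪ doubleCoset weyl borel borel := by
  obtain rfl | hne := eq_or_ne u 1
  · left
    simp
  · obtain ⟨i, m, rfl⟩ := exists_eq_conj_orbitRep hu hne
    have ht := weyl_conj_zpowers_sigma2_mem (npow_mem_zpowers sigma2 m)
    convert mul_mul_mem_union_doubleCoset ht (inv_mem ht) (.inr (weyl_conj_orbitRep_mem i)) using 1
    group

theorem weyl_conj_borel_mem {b : Perm (Fin 28)} (hb : b ∈ borel) :
    weyl * b * weyl⁻¹ ∈ (borel : Set (Perm (Fin 28))) ∪ doubleCoset weyl borel borel := by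
  rw [← SetLike.mem_coe, coe_borel] at hb
  obtain ⟨t, ht, u, hu, rfl⟩ := hb
  convert mul_mul_mem_union_doubleCoset (weyl_conj_zpowers_sigma2_mem ht) (one_mem borel)
    (weyl_conj_unipotent_mem hu) using 1
  group

theorem closure_sigma_le : closure {sigma1, sigma2, sigma3} ≤ borel ⊔ zpowers weyl := by
  have hS : sigma2 ∈ borel ⊔ zpowers weyl := mem_sup_left sigma2_mem_borel
  have hY : rootY ∈ borel ⊔ zpowers weyl := mem_sup_left (unipotent_le_borel rootY_mem_unipotent)
  have hZ : rootZ ∈ borel ⊔ zpowers weyl := mem_sup_left (unipotent_le_borel rootZ_mem_unipotent)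
  have hW : weyl ∈ borel ⊔ zpowers weyl := mem_sup_right (mem_zpowers weyl)
  refine (closure_le _).mpr ?_
  rintro _ (rfl | rfl | rfl)
  · have hword : sigma1 = rootY⁻¹ * sigma2 ^ 3 * weyl * rootZ⁻¹ * rootY := by
      rw [weyl_eq]
      group
    rw [hword]
    exact mul_mem (mul_mem (mul_mem (mul_mem (inv_mem hY) (pow_mem hS 3)) hW) (inv_mem hZ)) hY
  · exact hS
  · rw [eq_mul_inv_of_mul_eq rootZ_eq.symm]
    exact mul_mem hZ (inv_mem (pow_mem hS 3))

theorem borel_sup_zpowers_weyl_le :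
    borel ⊔ zpowers weyl ≤ closure {sigma1, sigma2, sigma3} := by
  have h1 : sigma1 ∈ closure {sigma1, sigma2, sigma3} := subset_closure (by simp)
  have h2 : sigma2 ∈ closure {sigma1, sigma2, sigma3} := subset_closure (by simp)
  have h3 : sigma3 ∈ closure {sigma1, sigma2, sigma3} := subset_closure (by simp)
  have hX : rootX ∈ closure {sigma1, sigma2, sigma3} := by
    rw [rootX_eq]
    exact mul_mem (mul_mem (mul_mem (mul_mem (mul_mem (mul_mem h3 h2) h1) (pow_mem h2 2)) h3) h2) h1
  have hY : rootY ∈ closure {sigma1, sigma2, sigma3} := mul_mem (mul_mem h2 hX) (inv_mem h2)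
  have hZ : rootZ ∈ closure {sigma1, sigma2, sigma3} := by
    rw [rootZ_eq]
    exact mul_mem h3 (pow_mem h2 3)
  have hW : weyl ∈ closure {sigma1, sigma2, sigma3} := by
    rw [weyl_eq]
    exact mul_mem (mul_mem (mul_mem (mul_mem (inv_mem (pow_mem h2 3)) hY) h1) (inv_mem hY)) hZ
  refine sup_le ((closure_le _).mpr ?_) (zpowers_le.mpr hW)
  rintro _ (rfl | rfl | rfl | rfl)
  exacts [h2, hX, hY, hZ]

theorem closure_sigma_eq : closure {sigma1, sigma2, sigma3} = borel ⊔ zpowers weyl :=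
  le_antisymm closure_sigma_le borel_sup_zpowers_weyl_le

theorem orbit_borel_sup_zpowers_weyl :
    orbit (borel ⊔ zpowers weyl : Subgroup (Perm (Fin 28))) (17 : Fin 28) = Set.univ := by
  have hweyl : (21 : Fin 28) ∈
      orbit (borel ⊔ zpowers weyl : Subgroup (Perm (Fin 28))) (17 : Fin 28) :=
    ⟨⟨weyl, mem_sup_right (mem_zpowers weyl)⟩, weyl_apply⟩
  refine Set.eq_univ_of_forall fun c => ?_
  by_cases h17 : c = 17
  · exact h17 ▸ mem_orbit_self _
  · have hc : c ∈ orbit unipotent (21 : Fin 28) := by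
      rw [orbit_unipotent]
      exact h17
    obtain ⟨⟨u, hu⟩, rfl⟩ := hc
    rw [← orbit_eq_iff.mpr hweyl]
    exact ⟨⟨u, mem_sup_left (unipotent_le_borel hu)⟩, rfl⟩

theorem borel_sup_zpowers_weyl_inf_stabilizer :
    (borel ⊔ zpowers weyl) ⊓ stabilizer (Perm (Fin 28)) (17 : Fin 28) = borel := by
  have hmoved : weyl • (17 : Fin 28) ≠ 17 := by
    rw [Perm.smul_def, weyl_apply]
    decide
  have hsq : weyl * weyl ∈ borel := weyl_mul_weyl ▸ one_mem borel
  exact sup_zpowers_inf_stabilizer borel_le_stabilizer hmoved hsq fun _ => weyl_conj_borel_mem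

end Stover

/-- The subgroup of the symmetric group on 28 letters generated by σ₁, σ₂, σ₃ is a
finite group of order 6048 (the order of the simple group U₃(3)). -/
theorem stover_perm_group_order :
    Nat.card (Subgroup.closure {sigma1, sigma2, sigma3} : Subgroup (Equiv.Perm (Fin 28)))
      = 6048 := by
  rw [Stover.closure_sigma_eq, ← Stover.ncard_orbit_mul_card_inf_stabilizer _ (17 : Fin 28),
    Stover.orbit_borel_sup_zpowers_weyl, Set.ncard_univ, Nat.card_fin,
    Stover.borel_sup_zpowers_weyl_inf_stabilizer, Stover.card_borel]
end

section
/- The subgroup of GL₇(ℚ) generated by the matrices A and B is a finite group of order 6048, and it is isomorphic to the subgroup of the symmetric group on {1,…,28} generated by σ₁, σ₂, σ₃. -/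
open Equiv

def Amat : Matrix (Fin 7) (Fin 7) ℚ :=
  !![-1,0,0,0,0,0,0; 0,-1,0,0,0,0,0; 0,1,0,0,0,1,0; -1,0,0,0,0,0,1;
     0,0,0,0,1,0,0; 0,1,1,0,0,0,0; -1,0,0,1,0,0,0]

def Bmat : Matrix (Fin 7) (Fin 7) ℚ :=
  !![0,-1,0,0,0,-1,0; 0,1,1,0,0,0,0; 0,-1,0,0,0,0,0; 1,0,0,0,0,0,0;
     0,0,0,0,0,0,-1; 0,0,0,-1,0,0,1; 0,0,0,0,1,0,1]

def BmatInv : Matrix (Fin 7) (Fin 7) ℚ :=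
  !![0,0,0,1,0,0,0; 0,0,-1,0,0,0,0; 0,1,1,0,0,0,0; 0,0,0,0,-1,-1,0;
     0,0,0,0,1,0,1; -1,0,1,0,0,0,0; 0,0,0,0,-1,0,0]

set_option maxHeartbeats 1000000 in
/-- The matrix A as an element of GL₇(ℚ) (it is an involution). -/
def AU : GL (Fin 7) ℚ :=
  ⟨Amat, Amat,
    by ext i j; fin_cases i <;> fin_cases j <;>
      norm_num [Matrix.mul_apply, Fin.sum_univ_succ, Matrix.one_apply, Fin.ext_iff, Amat],
    by ext i j; fin_cases i <;> fin_cases j <;>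
      norm_num [Matrix.mul_apply, Fin.sum_univ_succ, Matrix.one_apply, Fin.ext_iff, Amat]⟩

set_option maxHeartbeats 1000000 in
/-- The matrix B as an element of GL₇(ℚ). -/
def BU : GL (Fin 7) ℚ :=
  ⟨Bmat, BmatInv,
    by ext i j; fin_cases i <;> fin_cases j <;>
      norm_num [Matrix.mul_apply, Fin.sum_univ_succ, Matrix.one_apply, Fin.ext_iff,
        Bmat, BmatInv],
    by ext i j; fin_cases i <;> fin_cases j <;>
      norm_num [Matrix.mul_apply, Fin.sum_univ_succ, Matrix.one_apply, Fin.ext_iff,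
        Bmat, BmatInv]⟩

/-!
The permutations `σ₁, σ₂, σ₃` are induced by unitary matrices on the 28 isotropic points of the
Hermitian form `x₁ȳ₃ + x₂ȳ₂ + x₃ȳ₁` over the field with nine elements. They act 2-transitively,
and the stabilizer of two points has order 8: a unitary matrix fixing the points `[1 : 0 : 0]` and
`[0 : 0 : 1]` is a multiple of `diag(u, 1, ū⁻¹)`, which leaves 8 possibilities for its action, while
`σ₂` has order 8 and fixes two points. So the order is `28 * 27 * 8 = 6048`.

The matrices `A` and `B` permute 28 lines of `ℚ⁷`. A matrix fixing all these lines is a scalar `c`;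
if its determinant is `1`, then `c ^ 7 = 1` and `c = 1`. So `⟨A, B⟩` is isomorphic to the
permutation group it induces on the lines, and that group is `⟨σ₁, σ₂, σ₃⟩`.
-/

open scoped LinearAlgebra.Projectivization Matrix

section Correspondence

variable {P Q X ι : Type*} [Group P] [MulAction P X] [Group Q] [MulAction Q ι]

variable (P Q) in
/-- The pairs `(g, π)` such that `g` moves the family `v` of points as `π` moves its indices. -/
def equivariantPairs (v : ι → X) : Subgroup (P × Q) where
  carrier := {m | ∀ i, m.1 • v i = v (m.2 • i)}
  one_mem' i := by simp only [Prod.fst_one, Prod.snd_one, one_smul]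
  mul_mem' {a b} ha hb i := by
    rw [Prod.fst_mul, Prod.snd_mul, mul_smul, mul_smul, hb i, ha]
  inv_mem' {a} ha i := by
    rw [Prod.fst_inv, Prod.snd_inv, inv_smul_eq_iff, ha, smul_inv_smul]

theorem snd_eq_one_of_mem_equivariantPairs [FaithfulSMul Q ι] {v : ι → X}
    (hv : Function.Injective v) {m : P × Q} (hm : m ∈ equivariantPairs P Q v) (h : m.1 = 1) :
    m.2 = 1 :=
  eq_of_smul_eq_smul fun i ↦ hv <| by rw [← hm i, h, one_smul, one_smul]

theorem nonempty_closure_fst_mulEquiv_closure_snd {M : Subgroup (P × Q)} {T : Set (P × Q)}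
    (hT : T ⊆ M) (hfst : ∀ m ∈ M, m.1 = 1 → m.2 = 1) (hsnd : ∀ m ∈ M, m.2 = 1 → m.1 = 1) :
    Nonempty (Subgroup.closure (Prod.fst '' T) ≃* Subgroup.closure (Prod.snd '' T)) := by
  have hTM : Subgroup.closure T ≤ M := (Subgroup.closure_le M).2 hT
  have fst_injective :
      Function.Injective ((MonoidHom.fst P Q).comp (Subgroup.closure T).subtype) :=
    (injective_iff_map_eq_one _).2 fun m hm ↦
      Subtype.ext (Prod.ext hm (hfst m (hTM m.2) hm))
  have snd_injective :
      Function.Injective ((MonoidHom.snd P Q).comp (Subgroup.closure T).subtype) :=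
    (injective_iff_map_eq_one _).2 fun m hm ↦
      Subtype.ext (Prod.ext (hsnd m (hTM m.2) hm) hm)
  rw [← MonoidHom.coe_fst, ← MonoidHom.coe_snd, ← MonoidHom.map_closure, ← MonoidHom.map_closure,
    ← Subgroup.range_subtype (Subgroup.closure T), ← MonoidHom.range_comp, ← MonoidHom.range_comp]
  exact ⟨(MonoidHom.ofInjective fst_injective).symm.trans (MonoidHom.ofInjective snd_injective)⟩

end Correspondence

section TwoTransitive

variable {G α : Type*} [Group G] [MulAction G α]

theorem isMultiplyPretransitive_two_of_base {a b : α} (ha : ∀ c, ∃ g : G, g • a = c)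
    (hb : ∀ c ≠ a, ∃ g : G, g • a = a ∧ g • b = c) :
    MulAction.IsMultiplyPretransitive G α 2 := by
  have base {c d : α} (hcd : c ≠ d) : ∃ g : G, g • a = c ∧ g • b = d := by
    obtain ⟨g, rfl⟩ := ha c
    obtain ⟨h, hha, hhb⟩ := hb (g⁻¹ • d) fun h ↦ hcd (inv_smul_eq_iff.1 h).symm
    exact ⟨g * h, by rw [mul_smul, hha], by rw [mul_smul, hhb, smul_inv_smul]⟩
  refine MulAction.is_two_pretransitive_iff.2 fun hab hcd ↦ ?_
  obtain ⟨g, rfl, rfl⟩ := base hab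
  obtain ⟨h, rfl, rfl⟩ := base hcd
  exact ⟨h * g⁻¹, by simp only [mul_smul, inv_smul_smul, and_self]⟩

theorem card_eq_mul_card_fixingSubgroup_pair [Finite α]
    (h : MulAction.IsMultiplyPretransitive G α 2) {a b : α} (hab : a ≠ b) :
    Nat.card G =
      Nat.card α * (Nat.card α - 1) * Nat.card (fixingSubgroup G ({a, b} : Set α)) := by
  have hpair : ({a, b} : Set α).ncard = 2 := Set.ncard_pair hab
  have hindex := MulAction.IsMultiplyPretransitive.index_of_fixingSubgroup_eq (G := G) {a, b}
    (by rwa [hpair])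
  rw [hpair, mul_comm, ← Nat.descFactorial_eq_factorial_mul_choose] at hindex
  rw [← (fixingSubgroup G {a, b}).index_mul_card, hindex]
  simp only [Nat.descFactorial, tsub_zero, mul_one, mul_comm]

end TwoTransitive

section Lines

variable {K n : Type*} [Field K]

theorem projectivization_mk_eq_mk_iff {v w : n → K} {hv : v ≠ 0} {hw : w ≠ 0} :
    Projectivization.mk K v hv = Projectivization.mk K w hw ↔ ∀ i j, v i * w j = v j * w i := by
  rw [Projectivization.mk_eq_mk_iff']
  refine ⟨?_, fun h ↦ ?_⟩
  · rintro ⟨a, rfl⟩ i j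
    simp only [Pi.smul_apply, smul_eq_mul]
    ring
  · obtain ⟨k, hk⟩ := Function.ne_iff.1 hw
    refine ⟨v k / w k, funext fun i ↦ ?_⟩
    rw [Pi.smul_apply, smul_eq_mul, div_mul_eq_mul_div, h k i, mul_div_cancel_right₀ _ hk]

variable [DecidableEq n]

variable (K) in
/-- The point of projective space spanned by the `k`-th standard basis vector. -/
def coordPoint (k : n) : ℙ K (n → K) :=
  .mk K (Pi.single k 1) (Pi.single_ne_zero_iff.2 one_ne_zero)

variable [Fintype n]

theorem smul_mk_eq_mk_iff {g : GL n K} {v w : n → K} {hv : v ≠ 0} {hw : w ≠ 0} :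
    g • Projectivization.mk K v hv = Projectivization.mk K w hw ↔
      ∀ i j, (g.1 *ᵥ v) i * w j = (g.1 *ᵥ v) j * w i :=
  projectivization_mk_eq_mk_iff

theorem smul_point_eq_of_eq_smul {g h : GL n K} {c : K} (hgh : g.1 = c • h.1)
    (x : ℙ K (n → K)) : g • x = h • x := by
  induction x with | h v hv =>
  refine (Projectivization.mk_eq_mk_iff' K _ _ _ _).2 ⟨c, ?_⟩
  change c • (h.1 *ᵥ v) = g.1 *ᵥ v
  rw [hgh, Matrix.smul_mulVec]

theorem apply_eq_zero_of_smul_coordPoint {g : GL n K} {k : n}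
    (hg : g • coordPoint K k = coordPoint K k) {i : n} (hi : i ≠ k) : g i k = 0 := by
  simpa [Matrix.mulVec_single_one, hi] using smul_mk_eq_mk_iff.1 hg i k

theorem exists_eq_scalar_of_smul_point_eq {g : GL n K}
    (hg : ∀ k : n, g • coordPoint K k = coordPoint K k) {w : n → K} {hw : w ≠ 0}
    (hsupp : ∀ i, w i ≠ 0) (hgw : g • Projectivization.mk K w hw = .mk K w hw) :
    ∃ c, g.1 = Matrix.scalar n c := by
  have hdiag : g.1 = Matrix.diagonal fun i ↦ g i i := by
    ext i j
    rcases eq_or_ne i j with rfl | hij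
    · rw [Matrix.diagonal_apply_eq]
    · rw [Matrix.diagonal_apply_ne _ hij, apply_eq_zero_of_smul_coordPoint (hg j) hij]
  obtain ⟨k, -⟩ := Function.ne_iff.1 hw
  refine ⟨g k k, ?_⟩
  rw [hdiag, Matrix.scalar_apply]
  congr 1 with i
  have := smul_mk_eq_mk_iff.1 hgw i k
  rw [hdiag, Matrix.mulVec_diagonal, Matrix.mulVec_diagonal] at this
  refine mul_right_cancel₀ (mul_ne_zero (hsupp i) (hsupp k)) ?_
  rw [Matrix.diagonal_apply_eq]
  linear_combination this

end Lines

section Determinant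

theorem det_eq_sign_mul_sign_mul_prod_of_lowerTriangular {n R : Type*} [Fintype n]
    [LinearOrder n] [CommRing R] {M : Matrix n n R} (σ τ : Perm n)
    (h : ∀ i j, i < j → M (σ i) (τ j) = 0) :
    M.det = Perm.sign σ * Perm.sign τ * ∏ i, M (σ i) (τ i) := by
  have htri : (M.submatrix σ τ).det = ∏ i, M (σ i) (τ i) :=
    Matrix.det_of_isLowerTriangular _ fun i j hij ↦ h i j hij
  have hperm : (M.submatrix σ τ).det = Perm.sign τ * (Perm.sign σ * M.det) := by
    rw [← Matrix.det_permute, ← Matrix.det_permute', Matrix.submatrix_submatrix]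
    rfl
  have sign_mul_self (π : Perm n) : ((Perm.sign π : ℤ) : R) * (Perm.sign π : ℤ) = 1 := by
    rw [← Int.cast_mul, Int.units_coe_mul_self, Int.cast_one]
  rw [← htri, hperm]
  linear_combination (-(Perm.sign τ : ℤ) * (Perm.sign τ : ℤ) * M.det) * sign_mul_self σ -
    M.det * sign_mul_self τ

end Determinant

section Hermitian

/-- The isometry group of the sesquilinear form with Gram matrix `J`. -/
def isometryGroup {n R : Type*} [Fintype n] [DecidableEq n] [CommRing R] [StarRing R]
    (J : Matrix n n R) : Subgroup (GL n R) where
  carrier := {g | g.1ᴴ * J * g.1 = J}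
  one_mem' := by simp
  mul_mem' {g h} hg hh := by
    change (g.1 * h.1)ᴴ * J * (g.1 * h.1) = J
    calc (g.1 * h.1)ᴴ * J * (g.1 * h.1) = h.1ᴴ * (g.1ᴴ * J * g.1) * h.1 := by
          simp only [Matrix.conjTranspose_mul, Matrix.mul_assoc]
      _ = J := by rw [hg, hh]
  inv_mem' {g} hg := by
    have hginv : g.1 * g⁻¹.1 = 1 := g.mul_inv
    calc g⁻¹.1ᴴ * J * g⁻¹.1 = g⁻¹.1ᴴ * (g.1ᴴ * J * g.1) * g⁻¹.1 := by rw [hg]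
      _ = (g.1 * g⁻¹.1)ᴴ * J * (g.1 * g⁻¹.1) := by
          simp only [Matrix.conjTranspose_mul, Matrix.mul_assoc]
      _ = J := by rw [hginv, Matrix.conjTranspose_one, Matrix.one_mul, Matrix.mul_one]

variable {K : Type*} [Field K]

variable (K) in
/-- The Gram matrix of the Hermitian form `x₁ȳ₃ + x₂ȳ₂ + x₃ȳ₁`, chosen so that the first and last
coordinate points are isotropic. -/
def antidiagonalGram : Matrix (Fin 3) (Fin 3) K := !![0, 0, 1; 0, 1, 0; 1, 0, 0]

variable [StarRing K]

theorem exists_eq_smul_diagonal_of_mem_isometryGroup {g : GL (Fin 3) K}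
    (hg : g ∈ isometryGroup (antidiagonalGram K))
    (h₀ : g • coordPoint K (0 : Fin 3) = coordPoint K 0)
    (h₂ : g • coordPoint K (2 : Fin 3) = coordPoint K 2) :
    ∃ (b : K) (u : Kˣ), g.1 = b • Matrix.diagonal ![(u : K), 1, (star (u : K))⁻¹] := by
  have g10 : g 1 0 = 0 := apply_eq_zero_of_smul_coordPoint h₀ (by decide)
  have g20 : g 2 0 = 0 := apply_eq_zero_of_smul_coordPoint h₀ (by decide)
  have g02 : g 0 2 = 0 := apply_eq_zero_of_smul_coordPoint h₂ (by decide)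
  have g12 : g 1 2 = 0 := apply_eq_zero_of_smul_coordPoint h₂ (by decide)
  have entry (i j) : star (g 2 i) * g 0 j + star (g 1 i) * g 1 j + star (g 0 i) * g 2 j =
      antidiagonalGram K i j := by
    rw [← congrFun₂ (show g.1ᴴ * antidiagonalGram K * g.1 = antidiagonalGram K from hg) i j]
    simp [antidiagonalGram, Matrix.mul_apply, Fin.sum_univ_three]
  have e20 : star (g 2 2) * g 0 0 = 1 := by
    simpa [antidiagonalGram, g10, g20] using entry 2 0
  have g21 : g 2 1 = 0 := by
    simpa [antidiagonalGram, g10, g20, right_ne_zero_of_mul_eq_one e20] using entry 0 1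
  have g01 : g 0 1 = 0 := by
    simpa [antidiagonalGram, g02, g12, left_ne_zero_of_mul_eq_one e20] using entry 2 1
  have e11 : star (g 1 1) * g 1 1 = 1 := by
    simpa [antidiagonalGram, g21, g01] using entry 1 1
  have g00_ne : g 0 0 ≠ 0 := right_ne_zero_of_mul_eq_one e20
  have g11_ne : g 1 1 ≠ 0 := right_ne_zero_of_mul_eq_one e11
  have e02 : g 2 2 * star (g 0 0) = 1 := by simpa using congrArg star e20
  refine ⟨g 1 1, .mk0 (g 0 0 / g 1 1) (div_ne_zero g00_ne g11_ne), ?_⟩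
  have g22 : g 2 2 = g 1 1 * (star (g 1 1) / star (g 0 0)) := by
    rw [← mul_div_assoc, mul_comm, e11, eq_div_iff (star_ne_zero.2 g00_ne), e02]
  ext i j
  fin_cases i <;> fin_cases j <;> simp [g01, g02, g10, g12, g20, g21, g22,
    mul_div_cancel₀ _ g11_ne]

theorem card_le_card_units_of_isometries [Finite K] {ι S : Type*} {v : ι → ℙ K (Fin 3 → K)}
    (hv : Function.Injective v) {f : S → ι → ι} (hf : Function.Injective f)
    (hfg : ∀ s, ∃ g ∈ isometryGroup (antidiagonalGram K),
      g • coordPoint K (0 : Fin 3) = coordPoint K 0 ∧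
      g • coordPoint K (2 : Fin 3) = coordPoint K 2 ∧ ∀ i, g • v i = v (f s i)) :
    Nat.card S ≤ Nat.card Kˣ := by
  choose g hg h₀ h₂ hgf using hfg
  choose b u hbu using fun s ↦ exists_eq_smul_diagonal_of_mem_isometryGroup (hg s) (h₀ s) (h₂ s)
  refine Nat.card_le_card_of_injective u fun s t hst ↦ hf (funext fun i ↦ hv ?_)
  have hb : b t ≠ 0 := by
    intro h0
    refine Matrix.GeneralLinearGroup.det_ne_zero (g t) ?_
    rw [hbu, h0, zero_smul, Matrix.det_zero]
  rw [← hgf, ← hgf]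
  refine smul_point_eq_of_eq_smul (c := b s * (b t)⁻¹) ?_ _
  rw [hbu s, hbu t, hst, smul_smul, inv_mul_cancel_right₀ hb]

end Hermitian

section Unital

open scoped QuadraticAlgebra

instance fact_neg_one_nonsquare_zmod_three : Fact (∀ r : ZMod 3, r ^ 2 ≠ -1 + 0 * r) :=
  ⟨by decide⟩

/-- The field with nine elements, as `𝔽₃(ω)` with `ω ^ 2 = -1`; its `star` is the Frobenius map. -/
abbrev F9 : Type := QuadraticAlgebra (ZMod 3) (-1) 0

instance finite_F9 : Finite F9 := .of_equiv _ (QuadraticAlgebra.equivProd _ _).symm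

theorem card_units_F9 : Nat.card F9ˣ = 8 := by
  rw [Nat.card_units, Nat.card_congr (QuadraticAlgebra.equivProd _ _), Nat.card_prod, Nat.card_zmod]

/-- Coordinates of the 28 isotropic points, indexed so that `σ₁, σ₂, σ₃` act by isometries. -/
def unitalVec : Fin 28 → Fin 3 → F9 :=
  ![![ω, 1, 1 + ω], ![-1 + ω, 1, -1], ![1, 0, ω], ![1 + ω, 1, -1 - ω], ![1, 1, 1],
    ![1, 1, 1 - ω], ![-1 - ω, 1, 1 + ω], ![-ω, 1, -ω], ![-1 - ω, 1, -1], ![-1 + ω, 1, 1 - ω],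
    ![-1, 1, -1], ![1 - ω, 1, -ω], ![1 - ω, 1, 1], ![-1 - ω, 1, -ω], ![1 + ω, 1, ω],
    ![-1 + ω, 1, ω], ![-1, 1, -1 - ω], ![1, 0, 0], ![-ω, 1, -1 - ω], ![-1, 1, -1 + ω],
    ![ω, 1, ω], ![0, 0, 1], ![1 + ω, 1, 1], ![1, 0, -ω], ![1, 1, 1 + ω], ![-ω, 1, 1 - ω],
    ![ω, 1, -1 + ω], ![1 - ω, 1, -1 + ω]]

theorem unitalVec_ne_zero : ∀ i, unitalVec i ≠ 0 := by decide +kernel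

/-- The isotropic points of the Hermitian form `antidiagonalGram F9` in the projective plane. -/
def unitalPoint (i : Fin 28) : ℙ F9 (Fin 3 → F9) := .mk F9 (unitalVec i) (unitalVec_ne_zero i)

theorem unitalPoint_injective : Function.Injective unitalPoint := by
  have key : ∀ i j, (∀ k l, unitalVec i k * unitalVec j l = unitalVec i l * unitalVec j k) →
      i = j := by decide +kernel
  exact fun i j hij ↦ key i j (projectivization_mk_eq_mk_iff.1 hij)

theorem unitalPoint_seventeen : unitalPoint 17 = coordPoint F9 0 := by
  have : unitalVec 17 = Pi.single 0 1 := by decide +kernel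
  simp only [unitalPoint, coordPoint, this]

theorem unitalPoint_twentyone : unitalPoint 21 = coordPoint F9 2 := by
  have : unitalVec 21 = Pi.single 2 1 := by decide +kernel
  simp only [unitalPoint, coordPoint, this]

/-- The permutations of the 28 isotropic points induced by unitary matrices, a copy of
`PGU₃(3)`. -/
def unitalGroup : Subgroup (Perm (Fin 28)) :=
  (equivariantPairs (GL (Fin 3) F9) (Perm (Fin 28)) unitalPoint ⊓
    (isometryGroup (antidiagonalGram F9)).prod ⊤).map (MonoidHom.snd _ _)

theorem mem_unitalGroup {π : Perm (Fin 28)} :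
    π ∈ unitalGroup ↔ ∃ g ∈ isometryGroup (antidiagonalGram F9),
      ∀ i, g • unitalPoint i = unitalPoint (π i) := by
  constructor
  · rintro ⟨⟨g, π⟩, ⟨hgπ, hg, -⟩, rfl⟩
    exact ⟨g, hg, hgπ⟩
  · rintro ⟨g, hg, hgπ⟩
    exact ⟨(g, π), ⟨hgπ, hg, Subgroup.mem_top π⟩, rfl⟩

theorem mem_unitalGroup_of_matrix {π : Perm (Fin 28)} (M : Matrix (Fin 3) (Fin 3) F9)
    (hdet : M.det ≠ 0) (hM : Mᴴ * antidiagonalGram F9 * M = antidiagonalGram F9)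
    (hπ : ∀ i k l,
      (M *ᵥ unitalVec i) k * unitalVec (π i) l = (M *ᵥ unitalVec i) l * unitalVec (π i) k) :
    π ∈ unitalGroup :=
  mem_unitalGroup.2 ⟨.mkOfDetNeZero M hdet, hM, fun i ↦ smul_mk_eq_mk_iff.2 (hπ i)⟩

theorem sigma1_mem_unitalGroup : sigma1 ∈ unitalGroup :=
  mem_unitalGroup_of_matrix !![-ω, -1, 1 - ω; 1 + ω, -1 - ω, ω; -1 + ω, -1 - ω, -1 + ω]
    (by decide +kernel) (by decide +kernel) (by decide +kernel)

theorem sigma2_mem_unitalGroup : sigma2 ∈ unitalGroup :=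
  mem_unitalGroup_of_matrix (Matrix.diagonal ![-1 + ω, 1, 1 - ω])
    (by decide +kernel) (by decide +kernel) (by decide +kernel)

theorem sigma3_mem_unitalGroup : sigma3 ∈ unitalGroup :=
  mem_unitalGroup_of_matrix !![-1 + ω, 0, 1 + ω; 0, -1, 0; 0, 0, 1 - ω]
    (by decide +kernel) (by decide +kernel) (by decide +kernel)

end Unital

section Order

/-- The group generated by `σ₁`, `σ₂`, `σ₃`. -/
abbrev sigmaGroup : Subgroup (Perm (Fin 28)) := Subgroup.closure {sigma1, sigma2, sigma3}

theorem sigma_mem_sigmaGroup :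
    sigma1 ∈ sigmaGroup ∧ sigma2 ∈ sigmaGroup ∧ sigma3 ∈ sigmaGroup := by
  simpa only [Set.insert_subset_iff, Set.singleton_subset_iff, SetLike.mem_coe] using
    Subgroup.subset_closure (G := Perm (Fin 28)) (k := {sigma1, sigma2, sigma3})

theorem sigmaGroup_le_unitalGroup : sigmaGroup ≤ unitalGroup := by
  rw [Subgroup.closure_le]
  rintro π (rfl | rfl | rfl)
  exacts [sigma1_mem_unitalGroup, sigma2_mem_unitalGroup, sigma3_mem_unitalGroup]

theorem exists_mem_sigmaGroup_apply_seventeen (p : Fin 28) :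
    ∃ g : sigmaGroup, g • (17 : Fin 28) = p := by
  obtain ⟨h₁, h₂, -⟩ := sigma_mem_sigmaGroup
  have key : ∀ p, ∃ m < 8, ∃ n < 12, (sigma2 ^ m * (sigma1 * sigma2 ^ 2) ^ n) 17 = p := by
    decide +kernel
  obtain ⟨m, -, n, -, h⟩ := key p
  exact ⟨⟨_, mul_mem (pow_mem h₂ m) (pow_mem (mul_mem h₁ (pow_mem h₂ 2)) n)⟩, h⟩

theorem exists_mem_sigmaGroup_fix_seventeen_apply_twentyone (p : Fin 28)
    (hp : p ≠ 17) : ∃ g : sigmaGroup, g • (17 : Fin 28) = 17 ∧ g • (21 : Fin 28) = p := by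
  obtain ⟨h₁, h₂, h₃⟩ := sigma_mem_sigmaGroup
  let τ := sigma1 * sigma3 * sigma2 ^ 3 * sigma1
  have hτ : τ ∈ sigmaGroup := mul_mem (mul_mem (mul_mem h₁ h₃) (pow_mem h₂ 3)) h₁
  have key : ∀ p ≠ 17, ∃ m < 8, ∃ n < 12,
      (sigma2 ^ m * τ ^ n) 17 = 17 ∧ (sigma2 ^ m * τ ^ n) 21 = p := by
    decide +kernel
  obtain ⟨m, -, n, -, h⟩ := key p hp
  exact ⟨⟨_, mul_mem (pow_mem h₂ m) (pow_mem hτ n)⟩, h⟩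

theorem sigmaGroup_isMultiplyPretransitive_two :
    MulAction.IsMultiplyPretransitive sigmaGroup (Fin 28) 2 :=
  isMultiplyPretransitive_two_of_base exists_mem_sigmaGroup_apply_seventeen
    exists_mem_sigmaGroup_fix_seventeen_apply_twentyone

theorem orderOf_sigma2 : orderOf sigma2 = 8 :=
  orderOf_eq_prime_pow (p := 2) (n := 2) (by decide +kernel) (by decide +kernel)

theorem card_fixingSubgroup_sigmaGroup :
    Nat.card (fixingSubgroup sigmaGroup ({17, 21} : Set (Fin 28))) = 8 := by
  apply le_antisymm
  · rw [← card_units_F9]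
    refine card_le_card_units_of_isometries unitalPoint_injective
      (f := fun s i ↦ s.1.1 i) (fun s t hst ↦ ?_) fun s ↦ ?_
    · exact Subtype.ext (Subtype.ext (Equiv.ext (congrFun hst)))
    · obtain ⟨g, hg, hgs⟩ := mem_unitalGroup.1 (sigmaGroup_le_unitalGroup s.1.2)
      have fix (i) (hi : i ∈ ({17, 21} : Set (Fin 28))) : g • unitalPoint i = unitalPoint i := by
        rw [hgs]
        exact congrArg unitalPoint ((mem_fixingSubgroup_iff _).1 s.2 i hi)
      rw [← unitalPoint_seventeen, ← unitalPoint_twentyone]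
      exact ⟨g, hg, fix 17 (by simp), fix 21 (by simp), hgs⟩
  · have sigma2_fix : ∀ i ∈ ({17, 21} : Set (Fin 28)), sigma2 i = i := by
      rintro i (rfl | rfl) <;> decide +kernel
    let s : fixingSubgroup sigmaGroup ({17, 21} : Set (Fin 28)) :=
      ⟨⟨sigma2, sigma_mem_sigmaGroup.2.1⟩, (mem_fixingSubgroup_iff _).2 sigma2_fix⟩
    calc 8 = orderOf s := by rw [← orderOf_sigma2, ← Subgroup.orderOf_coe, ← Subgroup.orderOf_coe]
      _ ≤ _ := orderOf_le_card

theorem card_sigmaGroup : Nat.card sigmaGroup = 6048 := by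
  rw [card_eq_mul_card_fixingSubgroup_pair sigmaGroup_isMultiplyPretransitive_two
    (show (17 : Fin 28) ≠ 21 by decide), card_fixingSubgroup_sigmaGroup, Nat.card_fin]

end Order

section RationalLines

/-- Spanning vectors of the 28 lines of `ℚ⁷` permuted by `A` and `B`. -/
def lineVec : Fin 28 → Fin 7 → ℚ :=
  ![![0, 0, 1, 1, -1, 1, 1], ![0, 0, 0, 1, -1, 0, 1], ![1, 0, 0, 0, 0, 0, 0],
    ![0, 1, 0, 1, -1, 0, 0], ![0, 0, 0, 0, 1, 0, 0], ![0, 1, -1, 0, 1, -1, -1],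
    ![0, 0, 0, 1, 0, 0, 0], ![1, -1, 1, 1, 0, 0, 1], ![0, 1, 0, 1, 0, -1, 0],
    ![0, 1, -1, 0, 0, -1, 0], ![0, 1, 0, 0, 0, 0, 0], ![1, -1, 1, 1, -1, 1, 1],
    ![1, 0, 0, 1, 0, -1, 0], ![0, 0, 0, 0, 0, 0, 1], ![1, 0, 0, 0, 1, -1, 0],
    ![0, 0, 1, 1, -1, 0, 0], ![1, -1, 1, 0, 0, 1, 1], ![0, 0, 0, 0, 1, -1, -1],
    ![1, 0, 1, 1, 0, 0, 0], ![1, -1, 1, 0, 0, 0, 0], ![1, 0, 1, 1, -1, 0, 1],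
    ![0, 1, 0, 0, 0, -1, -1], ![1, 0, 0, 1, 0, 0, 1], ![1, -1, 0, 0, 1, 0, 0],
    ![0, 0, 1, 0, 0, 0, 0], ![0, 0, 0, 0, 0, 1, 0], ![1, -1, 0, 0, 0, 0, 1],
    ![0, 0, 1, 0, -1, 1, 0]]

theorem lineVec_ne_zero : ∀ i, lineVec i ≠ 0 := by decide +kernel

/-- The 28 lines of `ℚ⁷` permuted by `A` and `B`, as points of projective space. -/
def linePoint (i : Fin 28) : ℙ ℚ (Fin 7 → ℚ) := .mk ℚ (lineVec i) (lineVec_ne_zero i)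

theorem linePoint_injective : Function.Injective linePoint := by
  have key : ∀ i j, (∀ k l, lineVec i k * lineVec j l = lineVec i l * lineVec j k) → i = j := by
    decide +kernel
  exact fun i j hij ↦ key i j (projectivization_mk_eq_mk_iff.1 hij)

theorem exists_linePoint_eq_coordPoint (k : Fin 7) : ∃ i, linePoint i = coordPoint ℚ k := by
  have key : ∀ k, ∃ i, lineVec i = Pi.single k 1 := by decide +kernel
  obtain ⟨i, hi⟩ := key k
  exact ⟨i, by simp only [linePoint, coordPoint, hi]⟩

/-- The permutation of the 28 lines induced by `A`. -/
def permA : Perm (Fin 28) := sigma1 ^ 2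

/-- The permutation of the 28 lines induced by `B`. -/
def permB : Perm (Fin 28) := sigma1 * sigma3 * sigma2⁻¹

theorem AU_smul_linePoint (i : Fin 28) : AU • linePoint i = linePoint (permA i) := by
  have key : ∀ i k l, (Amat *ᵥ lineVec i) k * lineVec (permA i) l =
      (Amat *ᵥ lineVec i) l * lineVec (permA i) k := by decide +kernel
  exact smul_mk_eq_mk_iff.2 (key i)

theorem BU_smul_linePoint (i : Fin 28) : BU • linePoint i = linePoint (permB i) := by
  have key : ∀ i k l, (Bmat *ᵥ lineVec i) k * lineVec (permB i) l =
      (Bmat *ᵥ lineVec i) l * lineVec (permB i) k := by decide +kernel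
  exact smul_mk_eq_mk_iff.2 (key i)

theorem det_AU : Matrix.GeneralLinearGroup.det AU = 1 := by
  let σ : Perm (Fin 7) := c[(2 : Fin 7), 5] * c[(3 : Fin 7), 6]
  have htri : ∀ i j, i < j → Amat (σ i) ((1 : Perm (Fin 7)) j) = 0 := by decide +kernel
  rw [Units.ext_iff, Matrix.GeneralLinearGroup.val_det_apply, show AU.1 = Amat from rfl,
    det_eq_sign_mul_sign_mul_prod_of_lowerTriangular σ 1 htri]
  decide +kernel

theorem det_BU : Matrix.GeneralLinearGroup.det BU = 1 := by
  let σ : Perm (Fin 7) := c[(0 : Fin 7), 4, 6, 3, 5] * c[(1 : Fin 7), 2]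
  let τ : Perm (Fin 7) := c[(0 : Fin 7), 6]
  have htri : ∀ i j, i < j → Bmat (σ i) (τ j) = 0 := by decide +kernel
  rw [Units.ext_iff, Matrix.GeneralLinearGroup.val_det_apply, show BU.1 = Bmat from rfl,
    det_eq_sign_mul_sign_mul_prod_of_lowerTriangular σ τ htri]
  decide +kernel

theorem eq_one_of_smul_linePoint_eq {g : GL (Fin 7) ℚ}
    (hdet : Matrix.GeneralLinearGroup.det g = 1)
    (hg : ∀ i, g • linePoint i = linePoint i) : g = 1 := by
  have hcoord (k : Fin 7) : g • coordPoint ℚ k = coordPoint ℚ k := by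
    obtain ⟨i, hi⟩ := exists_linePoint_eq_coordPoint k
    rw [← hi, hg]
  have hsupp : ∀ k, lineVec 11 k ≠ 0 := by decide +kernel
  obtain ⟨c, hc⟩ := exists_eq_scalar_of_smul_point_eq hcoord hsupp (hg 11)
  have hpow : c ^ 7 = 1 := by
    rw [← Units.val_one, ← hdet, Matrix.GeneralLinearGroup.val_det_apply, hc, Matrix.scalar_apply,
      Matrix.det_diagonal, Fin.prod_const]
  have hone : c = 1 :=
    (Odd.strictMono_pow (by decide : Odd 7)).injective (hpow.trans (one_pow 7).symm)
  exact Units.ext (by rw [hc, hone, map_one, Units.val_one])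

theorem nonempty_closure_mulEquiv_closure_perm :
    Nonempty (Subgroup.closure {AU, BU} ≃* Subgroup.closure {permA, permB}) := by
  have h := nonempty_closure_fst_mulEquiv_closure_snd (T := {(AU, permA), (BU, permB)})
    (M := equivariantPairs _ _ linePoint ⊓ Matrix.GeneralLinearGroup.det.ker.prod ⊤) ?_
    (fun m hm ↦ snd_eq_one_of_mem_equivariantPairs linePoint_injective hm.1) ?_
  · rwa [Set.image_pair, Set.image_pair] at h
  · rintro m (rfl | rfl)
    · exact ⟨AU_smul_linePoint, MonoidHom.mem_ker.2 det_AU, Subgroup.mem_top _⟩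
    · exact ⟨BU_smul_linePoint, MonoidHom.mem_ker.2 det_BU, Subgroup.mem_top _⟩
  · rintro ⟨g, π⟩ ⟨hg, hdet, -⟩ rfl
    exact eq_one_of_smul_linePoint_eq hdet hg

theorem perm_mem_sigmaGroup : permA ∈ sigmaGroup ∧ permB ∈ sigmaGroup := by
  obtain ⟨h₁, h₂, h₃⟩ := sigma_mem_sigmaGroup
  rw [permA, permB]
  exact ⟨pow_mem h₁ 2, mul_mem (mul_mem h₁ h₃) (inv_mem h₂)⟩

theorem sigma1_eq_word : sigma1 = permB * (permA * permB ^ (-1 : ℤ)) * (permA * permB ^ (2 : ℤ)) *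
    (permA * permB ^ (-1 : ℤ)) * (permA * permB ^ (1 : ℤ)) := by
  decide +kernel

theorem sigma2_eq_word : sigma2 = permB ^ (-2 : ℤ) * (permA * permB ^ (-2 : ℤ)) *
    (permA * permB ^ (-1 : ℤ)) * (permA * permB ^ (1 : ℤ)) * (permA * permB ^ (1 : ℤ)) * permA := by
  decide +kernel

theorem sigma3_eq_word : sigma3 = sigma1⁻¹ * permB * sigma2 := by
  rw [permB]
  group

theorem closure_perm_eq_sigmaGroup : Subgroup.closure {permA, permB} = sigmaGroup := by
  have hA : permA ∈ Subgroup.closure {permA, permB} :=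
    Subgroup.subset_closure (Set.mem_insert _ _)
  have hB : permB ∈ Subgroup.closure {permA, permB} :=
    Subgroup.subset_closure (Set.mem_insert_of_mem _ rfl)
  have hAB (k : ℤ) : permA * permB ^ k ∈ Subgroup.closure {permA, permB} :=
    mul_mem hA (zpow_mem hB k)
  have h₁ : sigma1 ∈ Subgroup.closure {permA, permB} := by
    rw [sigma1_eq_word]
    exact mul_mem (mul_mem (mul_mem (mul_mem hB (hAB _)) (hAB _)) (hAB _)) (hAB _)
  have h₂ : sigma2 ∈ Subgroup.closure {permA, permB} := by
    rw [sigma2_eq_word]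
    exact mul_mem (mul_mem (mul_mem (mul_mem (mul_mem (zpow_mem hB _) (hAB _)) (hAB _)) (hAB _))
      (hAB _)) hA
  have h₃ : sigma3 ∈ Subgroup.closure {permA, permB} := by
    rw [sigma3_eq_word]
    exact mul_mem (mul_mem (inv_mem h₁) hB) h₂
  refine le_antisymm ((Subgroup.closure_le _).2 ?_) ((Subgroup.closure_le _).2 ?_)
  · exact Set.pair_subset perm_mem_sigmaGroup.1 perm_mem_sigmaGroup.2
  · exact Set.insert_subset h₁ (Set.pair_subset h₂ h₃)

end RationalLines

/-- The subgroup of GL₇(ℚ) generated by A and B is a finite group of order 6048,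
isomorphic to the subgroup of S₂₈ generated by σ₁, σ₂, σ₃. -/
theorem matrix_group_order_and_iso :
    Nat.card (Subgroup.closure {AU, BU} : Subgroup (GL (Fin 7) ℚ)) = 6048 ∧
      Nonempty ((Subgroup.closure {AU, BU} : Subgroup (GL (Fin 7) ℚ)) ≃*
        (Subgroup.closure {sigma1, sigma2, sigma3} : Subgroup (Equiv.Perm (Fin 28)))) := by
  obtain ⟨e⟩ := nonempty_closure_mulEquiv_closure_perm
  rw [closure_perm_eq_sigmaGroup] at e
  exact ⟨(Nat.card_congr e.toEquiv).trans card_sigmaGroup, ⟨e⟩⟩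
end

section
/- The 7-dimensional subspace K_ℂ = span_ℂ(v₁,…,v₇) of ⋀²ℂ⁷ contains no nonzero decomposable vector: for all w₁, w₂ ∈ ℂ⁷, if w₁ ∧ w₂ lies in K_ℂ then w₁ ∧ w₂ = 0. -/
noncomputable section

open ExteriorAlgebra

/-- The standard basis of ℂ⁷. -/
def e (i : Fin 7) : Fin 7 → ℂ := Pi.single i 1

/-- The wedge product `eᵢ ∧ eⱼ` inside the exterior algebra of ℂ⁷. -/
def wedge (i j : Fin 7) : ExteriorAlgebra ℂ (Fin 7 → ℂ) := ι ℂ (e i) * ι ℂ (e j)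

/-- The lexicographic enumeration of the pairs i < j indexing the basis
`f₁ = e₁∧e₂, …, f₂₁ = e₆∧e₇` of ⋀²ℂ⁷ (0-indexed). -/
def pairIdx : Fin 21 → Fin 7 × Fin 7 :=
  ![(0,1), (0,2), (0,3), (0,4), (0,5), (0,6), (1,2), (1,3), (1,4), (1,5), (1,6), (2,3),
    (2,4), (2,5), (2,6), (3,4), (3,5), (3,6), (4,5), (4,6), (5,6)]

/-- The 7×21 coefficient matrix `ᵗM = (N, 2·I₇)`: row `j` gives the coordinates of `vⱼ`
in the basis `f₁, …, f₂₁` of ⋀²ℂ⁷. -/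
def Mcoef : Matrix (Fin 7) (Fin 21) ℂ :=
  !![0,0,2,-2,-2,-2,0,2,2,-2,2,2,2,2,2,0,0,0,0,0,0;
     -1,0,0,2,4,0,1,-3,-3,1,-3,-4,-2,-4,0,2,0,0,0,0,0;
     0,-2,0,-2,-2,0,-2,2,2,0,0,2,2,2,0,0,2,0,0,0,0;
     -1,-2,2,0,-2,0,-1,1,3,1,1,0,0,2,0,0,0,2,0,0,0;
     -1,1,-1,3,1,3,0,-4,-2,2,0,-4,-2,-2,0,0,0,0,2,0,0;
     0,3,-3,1,-1,1,1,-3,-3,-1,1,0,-2,-2,0,0,0,0,0,2,0;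
     1,1,1,3,3,1,2,-2,0,0,0,-2,0,-2,0,0,0,0,0,0,2]

/-- The vectors `v₁, …, v₇`: `vⱼ = Σₖ N_{j,k} fₖ + 2 f_{14+j}`. -/
def v (j : Fin 7) : ExteriorAlgebra ℂ (Fin 7 → ℂ) :=
  ∑ k : Fin 21, Mcoef j k • wedge (pairIdx k).1 (pairIdx k).2

/-- `K_ℂ = span_ℂ(v₁, …, v₇) ⊆ ⋀²ℂ⁷`. -/
def Kspan : Submodule ℂ (ExteriorAlgebra ℂ (Fin 7 → ℂ)) := Submodule.span ℂ (Set.range v)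

/-!
The coefficients in the basis `eᵢ ∧ eⱼ` of a decomposable bivector satisfy the Plücker relations
`pᵢⱼ pₖₗ - pᵢₖ pⱼₗ + pᵢₗ pⱼₖ = 0`. For `c₁ v₁ + ⋯ + c₇ v₇` every `pᵢⱼ` is a linear form in `c`, so
these are quadratic equations in `c`. One combination of them is the square of a linear form, which
must therefore vanish; on the hyperplane it cuts out, another combination is a square, and after
seven such steps `c = 0`. Such combinations exist because the restricted Plücker quadrics span all
quadratic forms in `c`; the linear forms are chosen to make them short.
-/

section PluckerCoordinates

variable {R M n : Type*} [CommRing R] [AddCommGroup M] [Module R M]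

/-- The Plücker coordinate of a bivector with respect to two linear functionals `f` and `g`, that
is, its pairing with `f ∧ g`. It is encoded as contraction by `f` and then by `g`, followed by the
projection to scalars, so as to be defined on the whole exterior algebra. -/
def pluckerCoord (f g : Module.Dual R M) : ExteriorAlgebra R M →ₗ[R] R :=
  algebraMapInv.toLinearMap ∘ₗ CliffordAlgebra.contractLeft g ∘ₗ CliffordAlgebra.contractLeft f

theorem pluckerCoord_ι_mul_ι (f g : Module.Dual R M) (a b : M) :
    pluckerCoord f g (ι R a * ι R b) = f a * g b - g a * f b := by
  simp [pluckerCoord, ι, CliffordAlgebra.contractLeft_ι_mul, CliffordAlgebra.contractLeft_ι]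

theorem pluckerCoord_relation (f g h k : Module.Dual R M) (a b : M) :
    pluckerCoord f g (ι R a * ι R b) * pluckerCoord h k (ι R a * ι R b) -
        pluckerCoord f h (ι R a * ι R b) * pluckerCoord g k (ι R a * ι R b) +
      pluckerCoord f k (ι R a * ι R b) * pluckerCoord g h (ι R a * ι R b) = 0 := by
  simp only [pluckerCoord_ι_mul_ι]
  ring

theorem pluckerCoord_coord_ι_mul_ι [LinearOrder n] (B : Module.Basis n R M) {i j k l : n}
    (hij : i < j) (hkl : k < l) :
    pluckerCoord (B.coord i) (B.coord j) (ι R (B k) * ι R (B l)) =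
      if i = k ∧ j = l then 1 else 0 := by
  have not_swapped : ¬(k = j ∧ l = i) := fun ⟨hkj, hli⟩ => (hkj ▸ hli ▸ hkl).asymm hij
  simp only [pluckerCoord_ι_mul_ι, Module.Basis.coord_apply, Module.Basis.repr_self,
    Finsupp.single_apply]
  grind

end PluckerCoordinates

theorem pairIdx_fst_lt_snd (k : Fin 21) : (pairIdx k).1 < (pairIdx k).2 := by
  decide +revert

theorem pairIdx_injective : Function.Injective pairIdx := by
  decide

/-- The coordinate at `eᵢ ∧ eⱼ` of a bivector of ℂ⁷, for `i < j`. -/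
def wedgeCoord (i j : Fin 7) : ExteriorAlgebra ℂ (Fin 7 → ℂ) →ₗ[ℂ] ℂ :=
  pluckerCoord ((Pi.basisFun ℂ (Fin 7)).coord i) ((Pi.basisFun ℂ (Fin 7)).coord j)

theorem wedgeCoord_wedge_pairIdx (k l : Fin 21) :
    wedgeCoord (pairIdx k).1 (pairIdx k).2 (wedge (pairIdx l).1 (pairIdx l).2) =
      if k = l then 1 else 0 := by
  simpa only [wedgeCoord, wedge, e, Pi.basisFun_apply, ← Prod.ext_iff, pairIdx_injective.eq_iff]
    using pluckerCoord_coord_ι_mul_ι (Pi.basisFun ℂ (Fin 7)) (pairIdx_fst_lt_snd k)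
      (pairIdx_fst_lt_snd l)

theorem wedgeCoord_sum_smul_v (c : Fin 7 → ℂ) (k : Fin 21) :
    wedgeCoord (pairIdx k).1 (pairIdx k).2 (∑ j, c j • v j) = Matrix.vecMul c Mcoef k := by
  simp [v, wedgeCoord_wedge_pairIdx, Matrix.vecMul, dotProduct]

theorem vecMul_Mcoef (x₀ x₁ x₂ x₃ x₄ x₅ x₆ : ℂ) :
    Matrix.vecMul ![x₀, x₁, x₂, x₃, x₄, x₅, x₆] Mcoef =
      ![-x₁ - x₃ - x₄ + x₆,
        -2 * x₂ - 2 * x₃ + x₄ + 3 * x₅ + x₆,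
        2 * x₀ + 2 * x₃ - x₄ - 3 * x₅ + x₆,
        -2 * x₀ + 2 * x₁ - 2 * x₂ + 3 * x₄ + x₅ + 3 * x₆,
        -2 * x₀ + 4 * x₁ - 2 * x₂ - 2 * x₃ + x₄ - x₅ + 3 * x₆,
        -2 * x₀ + 3 * x₄ + x₅ + x₆,
        x₁ - 2 * x₂ - x₃ + x₅ + 2 * x₆,
        2 * x₀ - 3 * x₁ + 2 * x₂ + x₃ - 4 * x₄ - 3 * x₅ - 2 * x₆,
        2 * x₀ - 3 * x₁ + 2 * x₂ + 3 * x₃ - 2 * x₄ - 3 * x₅,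
        -2 * x₀ + x₁ + x₃ + 2 * x₄ - x₅,
        2 * x₀ - 3 * x₁ + x₃ + x₅,
        2 * x₀ - 4 * x₁ + 2 * x₂ - 4 * x₄ - 2 * x₆,
        2 * x₀ - 2 * x₁ + 2 * x₂ - 2 * x₄ - 2 * x₅,
        2 * x₀ - 4 * x₁ + 2 * x₂ + 2 * x₃ - 2 * x₄ - 2 * x₅ - 2 * x₆,
        2 * x₀, 2 * x₁, 2 * x₂, 2 * x₃, 2 * x₄, 2 * x₅, 2 * x₆] := by
  ext k
  fin_cases k <;> simp [Mcoef, Matrix.vecMul, dotProduct, Fin.sum_univ_succ] <;> ring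

theorem eq_zero_of_plucker_relations {p : Fin 7 → Fin 7 → ℂ} {x₀ x₁ x₂ x₃ x₄ x₅ x₆ : ℂ}
    (relation : ∀ i j k l, p i j * p k l - p i k * p j l + p i l * p j k = 0)
    (p_pairIdx : ∀ k, p (pairIdx k).1 (pairIdx k).2 =
      Matrix.vecMul ![x₀, x₁, x₂, x₃, x₄, x₅, x₆] Mcoef k) :
    ![x₀, x₁, x₂, x₃, x₄, x₅, x₆] = 0 := by
  obtain ⟨p01, p02, p03, p04, p05, p06, p12, p13, p14, p15, p16, p23, p24, p25, p26, p34, p35, p36,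
      p45, p46, p56⟩ := by
    simpa [vecMul_Mcoef, pairIdx, Fin.forall_fin_succ, -neg_mul] using p_pairIdx
  have q {i j k l : Fin 7} {a b c d s t : ℂ} (ij : p i j = a) (kl : p k l = b) (ik : p i k = c)
      (jl : p j l = d) (il : p i l = s) (jk : p j k = t) : a * b - c * d + s * t = 0 := by
    rw [← ij, ← kl, ← ik, ← jl, ← il, ← jk, relation]
  have q0123 := q p01 p23 p02 p13 p03 p12
  have q0125 := q p01 p25 p02 p15 p05 p12
  have q0126 := q p01 p26 p02 p16 p06 p12
  have q0134 := q p01 p34 p03 p14 p04 p13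
  have q0236 := q p02 p36 p03 p26 p06 p23
  have q0246 := q p02 p46 p04 p26 p06 p24
  have q0346 := q p03 p46 p04 p36 p06 p34
  have q0356 := q p03 p56 p05 p36 p06 p35
  have q1234 := q p12 p34 p13 p24 p14 p23
  have q1236 := q p12 p36 p13 p26 p16 p23
  have q1246 := q p12 p46 p14 p26 p16 p24
  have q2346 := q p23 p46 p24 p36 p26 p34
  have q3456 := q p34 p56 p35 p46 p36 p45
  obtain rfl : x₂ = x₆ - x₃ := sub_eq_zero.mp <| sq_eq_zero_iff.mp <| by
    linear_combination (1 / 4 : ℂ) * (q0125 + q0236 + q0346 + q2346 - q0123 - q0126 - q0134 -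
      q0246 - q1236 - q3456)
  obtain rfl : x₁ = 0 := sq_eq_zero_iff.mp <| by
    linear_combination (1 / 8 : ℂ) * (q1234 + q3456 - q0346)
  obtain rfl : x₅ = x₃ := sub_eq_zero.mp <| sq_eq_zero_iff.mp <| by
    linear_combination (1 / 2 : ℂ) * (q0125 - q1246 - q3456)
  obtain rfl : x₅ = 0 := sq_eq_zero_iff.mp <| by
    linear_combination (1 / 8 : ℂ) * (q1236 - q0346)
  obtain rfl : x₆ = x₄ := sub_eq_zero.mp <| sq_eq_zero_iff.mp <| by
    linear_combination (1 / 2 : ℂ) * (q0123 + q0246)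
  obtain rfl : x₆ = 0 := sq_eq_zero_iff.mp <| by
    linear_combination (1 / 8 : ℂ) * q0356
  obtain rfl : x₀ = 0 := sq_eq_zero_iff.mp <| by
    linear_combination (-1 / 8 : ℂ) * q0134
  simp

theorem eq_zero_of_sum_smul_v_eq_ι_mul_ι {c : Fin 7 → ℂ} {a b : Fin 7 → ℂ}
    (h : ∑ j, c j • v j = ι ℂ a * ι ℂ b) : c = 0 := by
  have c_eq : c = ![c 0, c 1, c 2, c 3, c 4, c 5, c 6] := by
    ext j
    fin_cases j <;> rfl
  rw [c_eq]
  refine eq_zero_of_plucker_relations (p := fun i j => wedgeCoord i j (ι ℂ a * ι ℂ b))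
    (fun _ _ _ _ => pluckerCoord_relation _ _ _ _ a b) fun k => ?_
  rw [← c_eq, ← h, wedgeCoord_sum_smul_v]

theorem linearIndependent_v : LinearIndependent ℂ v := by
  refine Fintype.linearIndependent_iff.mpr fun c hc => congrFun ?_
  exact eq_zero_of_sum_smul_v_eq_ι_mul_ι (a := 0) (b := 0) (by simp [hc])

/-- The 7-dimensional subspace `K_ℂ` contains no nonzero decomposable vector: if
`w₁ ∧ w₂ ∈ K_ℂ` then `w₁ ∧ w₂ = 0`. -/
theorem Kspan_no_decomposable :
    Module.finrank ℂ Kspan = 7 ∧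
      ∀ w₁ w₂ : Fin 7 → ℂ, ι ℂ w₁ * ι ℂ w₂ ∈ Kspan → ι ℂ w₁ * ι ℂ w₂ = 0 := by
  refine ⟨(finrank_span_eq_card linearIndependent_v).trans (Fintype.card_fin 7),
    fun w₁ w₂ hw => ?_⟩
  obtain ⟨c, hc⟩ := (Submodule.mem_span_range_iff_exists_fun ℂ).mp hw
  have c_eq_zero : c = 0 := eq_zero_of_sum_smul_v_eq_ι_mul_ι hc
  simp [← hc, c_eq_zero]

end
end
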